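/- Suppose 0 < φ ≤ π/2 and 2φ ≥ θ > φ. Then ω(θ,φ) > π/3. -/

import Mathlib

/-- `ω(θ, α, β) = arccos((cos θ - cos α cos β) / (sin α sin β))`. -/
noncomputable def omega2 (θ α β : ℝ) : ℝ :=
  Real.arccos ((Real.cos θ - Real.cos α * Real.cos β) / (Real.sin α * Real.sin β))

/-- `ω(θ, α) := ω(θ, α, α)`. -/
noncomputable def omega1 (θ α : ℝ) : ℝ := omega2 θ α α


theorem stmt3 (θ φ : ℝ) (hφ : 0 < φ) (hφ2 : φ ≤ Real.pi / 2) (h1 : φ < θ)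
    (h2 : θ ≤ 2 * φ) :
    Real.pi / 3 < omega1 θ φ := by
  have hpi := Real.pi_pos
  have hc : Real.cos θ < Real.cos φ :=
    Real.cos_lt_cos_of_nonneg_of_le_pi hφ.le (by linarith) h1
  have hc2 : Real.cos (2 * φ) ≤ Real.cos θ :=
    Real.cos_le_cos_of_nonneg_of_le_pi (by linarith) (by linarith) h2
  rw [Real.cos_two_mul] at hc2
  have hs : 0 < Real.sin φ := Real.sin_pos_of_pos_of_lt_pi hφ (by linarith)
  have hss : 0 < Real.sin φ * Real.sin φ := mul_pos hs hs
  have hsc := Real.sin_sq_add_cos_sq φ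
  have h3 : Real.arccos (1 / 2) = Real.pi / 3 := by
    rw [← Real.cos_pi_div_three]
    exact Real.arccos_cos (by linarith) (by linarith)
  rw [← h3, omega1, omega2]
  apply Real.arccos_lt_arccos
  · rw [le_div_iff₀ hss]
    nlinarith
  · rw [div_lt_iff₀ hss]
    nlinarith [sq_nonneg (1 - Real.cos φ)]
  · norm_num
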